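/- Let g(w) = (w f_z(w))′, which equals √(2π)(1 − Φ(z))((1 + w²) e^{w²/2} Φ(w) + w/√(2π)) for w ≤ z and √(2π) Φ(z)((1 + w²) e^{w²/2}(1 − Φ(w)) − w/√(2π)) for w > z. Then for every z > 2 and every real w: g(w) ≤ 4(1 + z²)(1 + z³)(1 + |w|³)^{−1} e^{z²/8} (1 − Φ(z)) if w ≤ z/2, and g(w) ≤ 8(1 + z²) e^{z²/2} (1 − Φ(z)) if w > z/2. -/

import Mathlib

open MeasureTheory ProbabilityTheory Real

/-- The standard normal cumulative distribution function. -/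
noncomputable def Phi (z : ℝ) : ℝ :=
  (Real.sqrt (2 * Real.pi))⁻¹ * ∫ u in Set.Iic z, Real.exp (-u ^ 2 / 2)

/-- The bounded solution `f_z` of the Stein equation
`f'(w) - w f(w) = 1{w ≤ z} - Φ(z)`. -/
noncomputable def fz (z w : ℝ) : ℝ :=
  if w ≤ z then Real.sqrt (2 * Real.pi) * Real.exp (w ^ 2 / 2) * Phi w * (1 - Phi z)
  else Real.sqrt (2 * Real.pi) * Real.exp (w ^ 2 / 2) * Phi z * (1 - Phi w)

/-- The derivative `f_z'`, expressed via the Stein equation. -/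
noncomputable def fz' (z w : ℝ) : ℝ :=
  w * fz z w + (if w ≤ z then 1 else 0) - Phi z

/-- The truncation `x̄ᵢ = ξᵢ 1{ξᵢ ≤ 1}`. -/
noncomputable def xbar {Ω : Type*} {n : ℕ} (ξ : Fin n → Ω → ℝ) (i : Fin n) (ω : Ω) : ℝ :=
  if ξ i ω ≤ 1 then ξ i ω else 0

/-- `W̄ = ∑ᵢ x̄ᵢ`. -/
noncomputable def Wbar {Ω : Type*} {n : ℕ} (ξ : Fin n → Ω → ℝ) (ω : Ω) : ℝ :=
  ∑ i, xbar ξ i ω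

/-- `W̄⁽ⁱ⁾ = W̄ - x̄ᵢ`. -/
noncomputable def Wbari {Ω : Type*} {n : ℕ} (ξ : Fin n → Ω → ℝ) (i : Fin n) (ω : Ω) : ℝ :=
  Wbar ξ ω - xbar ξ i ω

/-- `K̄ᵢ(t) = E[x̄ᵢ (1{0 ≤ t ≤ x̄ᵢ} - 1{x̄ᵢ ≤ t < 0})]`. -/
noncomputable def Kbar {Ω : Type*} [MeasureSpace Ω] {n : ℕ} (ξ : Fin n → Ω → ℝ)
    (i : Fin n) (t : ℝ) : ℝ :=
  ∫ ω, xbar ξ i ω * ((if 0 ≤ t ∧ t ≤ xbar ξ i ω then (1 : ℝ) else 0)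
    - (if xbar ξ i ω ≤ t ∧ t < 0 then (1 : ℝ) else 0))

/-- `β₂ = ∑ᵢ E[ξᵢ² 1{|ξᵢ| > 1}]`. -/
noncomputable def beta2 {Ω : Type*} [MeasureSpace Ω] {n : ℕ} (ξ : Fin n → Ω → ℝ) : ℝ :=
  ∑ i, ∫ ω, (if 1 < |ξ i ω| then (ξ i ω) ^ 2 else 0)

/-- `β₃ = ∑ᵢ E[|ξᵢ|³ 1{|ξᵢ| ≤ 1}]`. -/
noncomputable def beta3 {Ω : Type*} [MeasureSpace Ω] {n : ℕ} (ξ : Fin n → Ω → ℝ) : ℝ :=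
  ∑ i, ∫ ω, (if |ξ i ω| ≤ 1 then |ξ i ω| ^ 3 else 0)

/-- The explicit formula for g(w) = (w f_z(w))'. -/
noncomputable def gfun (z w : ℝ) : ℝ :=
  if w ≤ z then
    Real.sqrt (2 * Real.pi) * (1 - Phi z)
      * ((1 + w ^ 2) * Real.exp (w ^ 2 / 2) * Phi w + w / Real.sqrt (2 * Real.pi))
  else
    Real.sqrt (2 * Real.pi) * Phi z
      * ((1 + w ^ 2) * Real.exp (w ^ 2 / 2) * (1 - Phi w) - w / Real.sqrt (2 * Real.pi))

noncomputable def Qt (z : ℝ) : ℝ := ∫ u in Set.Ioi z, Real.exp (-u ^ 2 / 2)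

lemma gauss_int : Integrable (fun u : ℝ => Real.exp (-u ^ 2 / 2)) := by
  have h := integrable_exp_neg_mul_sq (b := 1 / 2) (by norm_num)
  refine h.congr (Filter.Eventually.of_forall fun u => ?_)
  show Real.exp _ = Real.exp _
  congr 1; ring

lemma gauss_tot : ∫ u : ℝ, Real.exp (-u ^ 2 / 2) = Real.sqrt (2 * Real.pi) := by
  have h := integral_gaussian (1 / 2)
  have e : Real.pi / (1 / 2) = 2 * Real.pi := by ring
  rw [e] at h
  rw [← h]
  congr 1; ext u; congr 1; ring

lemma s_pos : 0 < Real.sqrt (2 * Real.pi) := Real.sqrt_pos.2 (by positivity)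

lemma s_lt : Real.sqrt (2 * Real.pi) ≤ 2.6 := by
  rw [Real.sqrt_le_left (by norm_num)]
  have := Real.pi_lt_d2
  norm_num at *
  linarith

lemma Phi_nonneg (w : ℝ) : 0 ≤ Phi w := by
  unfold Phi
  exact mul_nonneg (by positivity) (integral_nonneg fun u => (Real.exp_pos _).le)

lemma Qt_nonneg (w : ℝ) : 0 ≤ Qt w := integral_nonneg fun u => (Real.exp_pos _).le

lemma s_compl (w : ℝ) : Real.sqrt (2 * Real.pi) * (1 - Phi w) = Qt w := by
  have h := intervalIntegral.integral_Iic_add_Ioi (gauss_int.integrableOn (s := Set.Iic w))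
    (gauss_int.integrableOn (s := Set.Ioi w))
  rw [gauss_tot] at h
  have hs := s_pos.ne'
  unfold Phi Qt
  rw [mul_sub, mul_inv_cancel_left₀ hs]
  linarith

lemma s_neg (w : ℝ) : Real.sqrt (2 * Real.pi) * Phi (-w) = Qt w := by
  have hs := s_pos.ne'
  unfold Phi Qt
  rw [mul_inv_cancel_left₀ hs]
  have := integral_comp_neg_Iic (-w) (fun u : ℝ => Real.exp (-u ^ 2 / 2))
  simpa using this

lemma Phi_le_one (w : ℝ) : Phi w ≤ 1 := by
  have h := s_compl w
  have h2 := Qt_nonneg w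
  by_contra hc
  push Not at hc
  nlinarith [s_pos]

lemma der_aux (r r' : ℝ → ℝ) (u : ℝ) (h : HasDerivAt r (r' u) u) :
    HasDerivAt (fun u => -(Real.exp (-u ^ 2 / 2) * r u))
      (Real.exp (-u ^ 2 / 2) * (u * r u - r' u)) u := by
  have h1 : HasDerivAt (fun u : ℝ => -u ^ 2 / 2) (-u) u := by
    have := ((hasDerivAt_id u).pow 2).neg.div_const 2
    refine this.congr_deriv ?_
    simp only [id]
    push_cast
    ring
  have := (h1.exp.mul h).neg
  refine this.congr_deriv ?_
  ring

lemma tend_aux (r : ℝ → ℝ) (h : Filter.Tendsto r Filter.atTop (nhds 0)) :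
    Filter.Tendsto (fun u => -(Real.exp (-u ^ 2 / 2) * r u)) Filter.atTop (nhds 0) := by
  have : Filter.Tendsto (fun u => Real.exp (-u ^ 2 / 2) * r u) Filter.atTop (nhds 0) := by
    refine squeeze_zero_norm (a := fun u => |r u|) (fun u => ?_) (by simpa using h.abs)
    rw [Real.norm_eq_abs, abs_mul, abs_of_pos (Real.exp_pos _)]
    refine mul_le_of_le_one_left (abs_nonneg _) (Real.exp_le_one_iff.2 ?_)
    nlinarith [sq_nonneg u]
  simpa using this.neg

lemma Qt_upper (r r' : ℝ → ℝ) (a : ℝ) (hd : ∀ u ∈ Set.Ici a, HasDerivAt r (r' u) u)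
    (ht : Filter.Tendsto r Filter.atTop (nhds 0))
    (h1 : ∀ u ∈ Set.Ioi a, 1 ≤ u * r u - r' u) : Qt a ≤ Real.exp (-a ^ 2 / 2) * r a := by
  have p : ∀ u ∈ Set.Ioi a, 0 ≤ Real.exp (-u ^ 2 / 2) * (u * r u - r' u) := fun u hu =>
    mul_nonneg (Real.exp_pos _).le (by linarith [h1 u hu])
  have e := integral_Ioi_of_hasDerivAt_of_nonneg' (fun u hu => der_aux r r' u (hd u hu)) p
    (tend_aux r ht)
  have i := integrableOn_Ioi_deriv_of_nonneg' (fun u hu => der_aux r r' u (hd u hu)) p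
    (tend_aux r ht)
  have := setIntegral_mono_on gauss_int.integrableOn i measurableSet_Ioi
    (fun u hu => le_mul_of_one_le_right (Real.exp_pos _).le (h1 u hu))
  rw [e] at this
  unfold Qt
  linarith

lemma Qt_lower (r r' : ℝ → ℝ) (a : ℝ) (hd : ∀ u ∈ Set.Ici a, HasDerivAt r (r' u) u)
    (ht : Filter.Tendsto r Filter.atTop (nhds 0))
    (h0 : ∀ u ∈ Set.Ioi a, 0 ≤ u * r u - r' u)
    (h1 : ∀ u ∈ Set.Ioi a, u * r u - r' u ≤ 1) : Real.exp (-a ^ 2 / 2) * r a ≤ Qt a := by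
  have p : ∀ u ∈ Set.Ioi a, 0 ≤ Real.exp (-u ^ 2 / 2) * (u * r u - r' u) := fun u hu =>
    mul_nonneg (Real.exp_pos _).le (h0 u hu)
  have e := integral_Ioi_of_hasDerivAt_of_nonneg' (fun u hu => der_aux r r' u (hd u hu)) p
    (tend_aux r ht)
  have i := integrableOn_Ioi_deriv_of_nonneg' (fun u hu => der_aux r r' u (hd u hu)) p
    (tend_aux r ht)
  have := setIntegral_mono_on i gauss_int.integrableOn measurableSet_Ioi
    (fun u hu => mul_le_of_le_one_right (Real.exp_pos _).le (h1 u hu))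
  rw [e] at this
  unfold Qt
  linarith

lemma exp_cancel (a : ℝ) : Real.exp (a ^ 2 / 2) * Real.exp (-a ^ 2 / 2) = 1 := by
  rw [← Real.exp_add, neg_div, add_neg_cancel, Real.exp_zero]

lemma mills_lower (a : ℝ) (ha : 1 ≤ a) : a⁻¹ / 2 ≤ Real.exp (a ^ 2 / 2) * Qt a := by
  have h := Qt_lower (fun u => u⁻¹ / 2) (fun u => -(u ^ 2)⁻¹ / 2) a
    (fun u hu => (hasDerivAt_inv (by have : a ≤ u := hu; exact (by linarith : 0 < u).ne')).div_const 2)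
    (by simpa using tendsto_inv_atTop_zero.div_const (2 : ℝ))
    (fun u hu => by
      have : a < u := hu
      have h0 : 0 < u := by linarith
      have e : u * (u⁻¹ / 2) - -(u ^ 2)⁻¹ / 2 = 1 / 2 + (u ^ 2)⁻¹ / 2 := by field_simp; ring
      rw [e]; positivity)
    (fun u hu => by
      have : a < u := hu
      have h0 : 0 < u := by linarith
      have e : u * (u⁻¹ / 2) - -(u ^ 2)⁻¹ / 2 = 1 / 2 + (u ^ 2)⁻¹ / 2 := by field_simp; ring
      rw [e]
      have : (u ^ 2)⁻¹ ≤ 1 := inv_le_one_of_one_le₀ (by nlinarith)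
      linarith)
  have := mul_le_mul_of_nonneg_left h (Real.exp_pos (a ^ 2 / 2)).le
  rwa [← mul_assoc, exp_cancel, one_mul] at this

lemma mills_upper (a : ℝ) (ha : 0 < a) :
    Real.exp (a ^ 2 / 2) * Qt a ≤ a⁻¹ - a⁻¹ ^ 3 + 3 * a⁻¹ ^ 5 := by
  have h := Qt_upper (fun u => u⁻¹ - u⁻¹ ^ 3 + 3 * u⁻¹ ^ 5)
    (fun u => -u⁻¹ ^ 2 + 3 * u⁻¹ ^ 4 - 15 * u⁻¹ ^ 6) a
    (fun u hu => by
      have h0 : 0 < u := lt_of_lt_of_le ha hu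
      have d := hasDerivAt_inv h0.ne'
      have := (d.sub (d.pow 3)).add ((d.pow 5).const_mul 3)
      refine this.congr_deriv ?_
      simp only [Nat.reduceSub]
      push_cast
      field_simp
      ring)
    (by
      have t : Filter.Tendsto (fun u : ℝ => u⁻¹) Filter.atTop (nhds 0) := tendsto_inv_atTop_zero
      have := (t.sub (t.pow 3)).add ((t.pow 5).const_mul 3)
      simpa using this)
    (fun u hu => by
      have h0 : 0 < u := lt_trans ha hu
      have e : u * (u⁻¹ - u⁻¹ ^ 3 + 3 * u⁻¹ ^ 5) - (-u⁻¹ ^ 2 + 3 * u⁻¹ ^ 4 - 15 * u⁻¹ ^ 6)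
        = 1 + 15 * u⁻¹ ^ 6 := by field_simp; ring
      show 1 ≤ u * (u⁻¹ - u⁻¹ ^ 3 + 3 * u⁻¹ ^ 5) - (-u⁻¹ ^ 2 + 3 * u⁻¹ ^ 4 - 15 * u⁻¹ ^ 6)
      rw [e]
      have : 0 ≤ u⁻¹ ^ 6 := by positivity
      linarith)
  have := mul_le_mul_of_nonneg_left h (Real.exp_pos (a ^ 2 / 2)).le
  rwa [← mul_assoc, exp_cancel, one_mul] at this

lemma key_upper (a : ℝ) (ha : 1 ≤ a) :
    (1 + a ^ 2) * (Real.exp (a ^ 2 / 2) * Qt a) - a ≤ 5 * a⁻¹ ^ 3 := by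
  have h0 : 0 < a := by linarith
  have h := mul_le_mul_of_nonneg_left (mills_upper a h0) (by positivity : 0 ≤ 1 + a ^ 2)
  have e : (1 + a ^ 2) * (a⁻¹ - a⁻¹ ^ 3 + 3 * a⁻¹ ^ 5) = a + 2 * a⁻¹ ^ 3 + 3 * a⁻¹ ^ 5 := by
    field_simp; ring
  have i1 : a⁻¹ ≤ 1 := inv_le_one_of_one_le₀ ha
  have : a⁻¹ ^ 5 ≤ a⁻¹ ^ 3 := pow_le_pow_of_le_one (by positivity) i1 (by norm_num)
  linarith

/-- Pointwise bounds on g(w) = (w f_z(w))' for z > 2. -/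
theorem gfun_bound (z : ℝ) (hz : 2 < z) (w : ℝ) :
    (w ≤ z / 2 →
      gfun z w ≤ 4 * (1 + z ^ 2) * (1 + z ^ 3) * ((1 + |w| ^ 3))⁻¹
        * Real.exp (z ^ 2 / 8) * (1 - Phi z))
    ∧ (z / 2 < w →
      gfun z w ≤ 8 * (1 + z ^ 2) * Real.exp (z ^ 2 / 2) * (1 - Phi z)) := by
  have hs := s_pos
  have hs' := s_lt
  have hP := Phi_le_one z
  have hP0 : 0 ≤ 1 - Phi z := by linarith
  set s := Real.sqrt (2 * Real.pi) with hsdef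
  have gl : w ≤ z → gfun z w
      = (1 - Phi z) * ((1 + w ^ 2) * (Real.exp (w ^ 2 / 2) * (s * Phi w)) + w) := by
    intro h
    unfold gfun
    rw [if_pos h, ← hsdef]
    field_simp
  have gr : z < w → gfun z w
      = Phi z * ((1 + w ^ 2) * (Real.exp (w ^ 2 / 2) * Qt w) - w) := by
    intro h
    unfold gfun
    rw [if_neg (not_le.2 h), ← s_compl]
    field_simp
  have hsPhi : s * Phi w ≤ 2.6 := by nlinarith [Phi_le_one w, Phi_nonneg w]
  have hsPhi0 : 0 ≤ s * Phi w := mul_nonneg hs.le (Phi_nonneg w)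
  constructor
  · intro hw
    rw [gl (by linarith)]
    suffices H : (1 + |w| ^ 3) * ((1 + w ^ 2) * (Real.exp (w ^ 2 / 2) * (s * Phi w)) + w)
        ≤ 4 * (1 + z ^ 2) * (1 + z ^ 3) * Real.exp (z ^ 2 / 8) by
      have hp : 0 < 1 + |w| ^ 3 := by positivity
      have H2 : (1 + w ^ 2) * (Real.exp (w ^ 2 / 2) * (s * Phi w)) + w
          ≤ (4 * (1 + z ^ 2) * (1 + z ^ 3) * Real.exp (z ^ 2 / 8)) * (1 + |w| ^ 3)⁻¹ := by
        rw [← div_eq_mul_inv, le_div_iff₀ hp]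
        linarith
      calc _ ≤ (1 - Phi z) * _ := mul_le_mul_of_nonneg_left H2 hP0
        _ = _ := by ring
    have hE : 1 ≤ Real.exp (z ^ 2 / 8) := Real.one_le_exp (by positivity)
    have hz2 : 4 ≤ z ^ 2 := by nlinarith
    have hz3 : 8 ≤ z ^ 3 := by nlinarith
    have big : 180 ≤ 4 * (1 + z ^ 2) * (1 + z ^ 3) * Real.exp (z ^ 2 / 8) := by
      have : 45 ≤ (1 + z ^ 2) * (1 + z ^ 3) := by nlinarith
      nlinarith
    rcases le_or_gt 0 w with h0 | h0
    · rw [abs_of_nonneg h0]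
      have a1 : w ^ 3 ≤ z ^ 3 := pow_le_pow_left₀ h0 (by linarith) 3
      have a2 : w ^ 2 ≤ z ^ 2 := pow_le_pow_left₀ h0 (by linarith) 2
      have a3 : Real.exp (w ^ 2 / 2) ≤ Real.exp (z ^ 2 / 8) :=
        Real.exp_le_exp.2 (by nlinarith)
      have a4 : w ≤ (1 + z ^ 2) * (Real.exp (z ^ 2 / 8) * 1) := by nlinarith
      calc _ ≤ (1 + z ^ 3) * ((1 + z ^ 2) * (Real.exp (z ^ 2 / 8) * 2.6)
              + (1 + z ^ 2) * (Real.exp (z ^ 2 / 8) * 1)) := by gcongr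
        _ = 3.6 * ((1 + z ^ 2) * (1 + z ^ 3) * Real.exp (z ^ 2 / 8)) := by ring
        _ ≤ 4 * ((1 + z ^ 2) * (1 + z ^ 3) * Real.exp (z ^ 2 / 8)) := by
          gcongr; norm_num
        _ = _ := by ring
    · refine le_trans ?_ big
      rw [abs_of_neg h0]
      obtain ⟨x, rfl⟩ : ∃ x, w = -x := ⟨-w, by ring⟩
      have hx : 0 < x := by linarith
      rw [neg_neg, neg_sq]
      rcases le_or_gt 1 x with h1 | h1
      · rw [s_neg]
        have k := key_upper x h1
        have : (1 + x ^ 3) * ((1 + x ^ 2) * (Real.exp (x ^ 2 / 2) * Qt x) - x)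
            ≤ (1 + x ^ 3) * (5 * x⁻¹ ^ 3) := by gcongr
        have e : (1 + x ^ 3) * (5 * x⁻¹ ^ 3) = 5 * x⁻¹ ^ 3 + 5 := by field_simp
        have i1 : x⁻¹ ^ 3 ≤ 1 := pow_le_one₀ (by positivity) (inv_le_one_of_one_le₀ h1)
        linarith
      · have b2 : x ^ 2 ≤ 1 := pow_le_one₀ hx.le h1.le
        have b3 : x ^ 3 ≤ 1 := pow_le_one₀ hx.le h1.le
        have b4 : Real.exp (x ^ 2 / 2) ≤ 3 := by
          have := Real.exp_one_lt_d9
          have : Real.exp (x ^ 2 / 2) ≤ Real.exp 1 := Real.exp_le_exp.2 (by linarith)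
          linarith
        calc _ ≤ (1 + x ^ 3) * ((1 + x ^ 2) * (Real.exp (x ^ 2 / 2) * (s * Phi (-x))) + (0 : ℝ)) := by
              gcongr
          _ ≤ (1 + 1) * ((1 + 1) * (3 * 2.6) + (0 : ℝ)) := by
              gcongr
          _ ≤ _ := by norm_num
  · intro hw
    have hE : 1 ≤ Real.exp (z ^ 2 / 2) := Real.one_le_exp (by positivity)
    rcases le_or_gt w z with h | h
    · rw [gl h]
      have h0 : 0 ≤ w := by linarith
      have a2 : w ^ 2 ≤ z ^ 2 := pow_le_pow_left₀ h0 (by linarith) 2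
      have a3 : Real.exp (w ^ 2 / 2) ≤ Real.exp (z ^ 2 / 2) :=
        Real.exp_le_exp.2 (by linarith)
      have a4 : w ≤ (1 + z ^ 2) * (Real.exp (z ^ 2 / 2) * 1) := by nlinarith
      calc _ ≤ (1 - Phi z) * ((1 + z ^ 2) * (Real.exp (z ^ 2 / 2) * 2.6)
              + (1 + z ^ 2) * (Real.exp (z ^ 2 / 2) * 1)) := by gcongr
        _ = 3.6 * ((1 + z ^ 2) * Real.exp (z ^ 2 / 2) * (1 - Phi z)) := by ring
        _ ≤ 8 * ((1 + z ^ 2) * Real.exp (z ^ 2 / 2) * (1 - Phi z)) := by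
          gcongr; norm_num
        _ = _ := by ring
    · rw [gr h]
      have k := key_upper w (by linarith)
      have i2 : w⁻¹ ≤ 2⁻¹ := inv_anti₀ (by norm_num) (by linarith)
      have i0 : 0 < w⁻¹ := inv_pos.2 (by linarith)
      have i3 : w⁻¹ ^ 3 ≤ 2⁻¹ ^ 3 := pow_le_pow_left₀ i0.le i2 3
      have i4 : (2⁻¹ : ℝ) ^ 3 = 1 / 8 := by norm_num
      have k2 : (1 + w ^ 2) * (Real.exp (w ^ 2 / 2) * Qt w) - w ≤ 1 := by linarith
      have L : Phi z * ((1 + w ^ 2) * (Real.exp (w ^ 2 / 2) * Qt w) - w) ≤ 1 := by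
        nlinarith [Phi_nonneg z]
      refine L.trans ?_
      have m := mills_lower z (by linarith)
      rw [← s_compl, ← hsdef] at m
      have m2 : z⁻¹ / 2 ≤ 2.6 * (Real.exp (z ^ 2 / 2) * (1 - Phi z)) := by
        refine m.trans ?_
        have : 0 ≤ Real.exp (z ^ 2 / 2) * (1 - Phi z) := by positivity
        nlinarith
      have m3 : z ^ 2 * (z⁻¹ / 2) ≤ (1 + z ^ 2) * (2.6 * (Real.exp (z ^ 2 / 2) * (1 - Phi z))) := by
        gcongr
        linarith
      have e : z ^ 2 * (z⁻¹ / 2) = z / 2 := by field_simp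
      rw [e] at m3
      linarith
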